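/- Let d ≥ 1 be an integer, m ∈ ℝ, k ∈ ℕ, and let J : ℝ^d → ℝ be any function. Let S = {α ∈ ℝ^d : 0 ≤ α₁ ≤ … ≤ α_d ≤ 1/4 and (4/π)·Σ_{i=1}^{d}(−1)^{i+1}·cos(2πα_i) = m} and S_k = {α ∈ ℝ^d : 0 ≤ α₁ ≤ … ≤ α_d ≤ 1/4 and m − Δm_k ≤ (4/π)·Σ_{i=1}^{d}(−1)^{i+1}·Γ_k(α_i) ≤ m + Δm_k}. If S is nonempty and J is bounded below on S_k, then the infimum of J over S_k is at most the infimum of J over S; that is, J_k* ≤ J*. -/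

import Mathlib

open Real

/-- The degree-`k` Taylor polynomial of `f(α) = cos(2πα)` about the expansion point `α₀`,
`Γ_k(α) = Σ_{n=0}^{k} f⁽ⁿ⁾(α₀)·(α − α₀)^n/n!`, evaluated at `α`. -/
noncomputable def taylorCos (k : ℕ) (α₀ α : ℝ) : ℝ :=
  ∑ n ∈ Finset.range (k + 1),
    iteratedDeriv n (fun t : ℝ => Real.cos (2 * π * t)) α₀ / n.factorial * (α - α₀) ^ n

/-- The modulation-index error bound Δm_k = (4d/π)·(2π)^{k+1}·(1/8)^{k+1}/(k+1)!. -/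
noncomputable def deltaM (d k : ℕ) : ℝ :=
  (4 * (d : ℝ) / π) * (2 * π) ^ (k + 1) * (1 / 8 : ℝ) ^ (k + 1) / (k + 1).factorial

/-- The exact OPP feasible set S: vectors α ∈ ℝ^d with 0 ≤ α₁ ≤ … ≤ α_d ≤ 1/4 satisfying
(4/π)·Σ_{i=1}^d (−1)^{i+1}·cos(2πα_i) = m (0-based indexing turns (−1)^{i+1} into (−1)^i). -/
def exactSet (d : ℕ) (m : ℝ) : Set (Fin d → ℝ) :=
  {α | Monotone α ∧ (∀ i, 0 ≤ α i) ∧ (∀ i, α i ≤ 1 / 4) ∧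
    (4 / π) * ∑ i : Fin d, (-1 : ℝ) ^ (i : ℕ) * Real.cos (2 * π * α i) = m}

/-- The level-k Taylor relaxed feasible set S_k: the equality constraint is replaced by
m − Δm_k ≤ (4/π)·Σ_{i=1}^d (−1)^{i+1}·Γ_k(α_i) ≤ m + Δm_k. -/
noncomputable def relaxedSet (d : ℕ) (m : ℝ) (k : ℕ) : Set (Fin d → ℝ) :=
  {α | Monotone α ∧ (∀ i, 0 ≤ α i) ∧ (∀ i, α i ≤ 1 / 4) ∧
    m - deltaM d k ≤ (4 / π) * ∑ i : Fin d, (-1 : ℝ) ^ (i : ℕ) * taylorCos k (1 / 8) (α i) ∧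
    (4 / π) * ∑ i : Fin d, (-1 : ℝ) ^ (i : ℕ) * taylorCos k (1 / 8) (α i) ≤ m + deltaM d k}

/-!
The Lagrange remainder of the degree-`k` Taylor polynomial of `cos (2πα)` about `1/8` is at most
`(2π)^(k+1) |α - 1/8|^(k+1) / (k+1)!`, and `|α - 1/8| ≤ 1/8` on `[0, 1/4]`. Adding the `d` error
bounds, each with weight `4/π`, gives exactly `Δm_k`, so `S ⊆ S_k`.
-/

section TaylorRemainder

variable {n : ℕ} {x₀ x : ℝ}

theorem taylorWithinEval_eq_taylorWithinEval_univ {E : Type*} [NormedAddCommGroup E]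
    [NormedSpace ℝ E] {f : ℝ → E} {s : Set ℝ} (hs : UniqueDiffOn ℝ s) (hx₀ : x₀ ∈ s)
    (hf : ContDiffAt ℝ n f x₀) :
    taylorWithinEval f n s x₀ x = taylorWithinEval f n Set.univ x₀ x := by
  simp only [taylor_within_apply, iteratedDerivWithin_univ]
  refine Finset.sum_congr rfl fun i hi => ?_
  have hin : (i : WithTop ℕ∞) ≤ n := mod_cast Finset.mem_range_succ_iff.1 hi
  rw [iteratedDerivWithin_eq_iteratedDeriv hs (hf.of_le hin) hx₀]

theorem abs_sub_taylorWithinEval_univ_le {f : ℝ → ℝ} {C : ℝ}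
    (hf : ContDiffOn ℝ (n + 1) f (Set.uIcc x₀ x)) (hf₀ : ContDiffAt ℝ n f x₀)
    (hC : ∀ y ∈ Set.uIoo x₀ x, |iteratedDeriv (n + 1) f y| ≤ C) :
    |f x - taylorWithinEval f n Set.univ x₀ x| ≤ C * |x - x₀| ^ (n + 1) / (n + 1).factorial := by
  rcases eq_or_ne x₀ x with rfl | hne
  · simp
  · obtain ⟨y, hy, hremainder⟩ := taylor_mean_remainder_lagrange_iteratedDeriv hne hf
    rw [← taylorWithinEval_eq_taylorWithinEval_univ (uniqueDiffOn_uIcc hne) Set.left_mem_uIcc hf₀,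
      hremainder, abs_div, abs_mul, abs_pow, Nat.abs_cast]
    gcongr
    exact hC y hy

end TaylorRemainder

theorem abs_iteratedDeriv_cos_const_mul_le (n : ℕ) (c x : ℝ) :
    |iteratedDeriv n (fun t => cos (c * t)) x| ≤ |c| ^ n := by
  rw [iteratedDeriv_comp_const_mul contDiff_cos, abs_mul, abs_pow]
  exact mul_le_of_le_one_right (by positivity) (abs_iteratedDeriv_cos_le_one n _)

theorem taylorCos_eq_taylorWithinEval_univ (k : ℕ) (α₀ α : ℝ) :
    taylorCos k α₀ α = taylorWithinEval (fun t => cos (2 * π * t)) k Set.univ α₀ α := by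
  rw [taylorCos, taylor_within_apply]
  refine Finset.sum_congr rfl fun n _ => ?_
  rw [iteratedDerivWithin_univ, smul_eq_mul]
  ring

theorem abs_cos_sub_taylorCos_le (k : ℕ) (α₀ α : ℝ) :
    |cos (2 * π * α) - taylorCos k α₀ α| ≤
      (2 * π) ^ (k + 1) * |α - α₀| ^ (k + 1) / (k + 1).factorial := by
  rw [taylorCos_eq_taylorWithinEval_univ]
  refine abs_sub_taylorWithinEval_univ_le (f := fun t => cos (2 * π * t))
    (by fun_prop) (by fun_prop) fun y _ => ?_
  simpa only [abs_of_pos two_pi_pos] using abs_iteratedDeriv_cos_const_mul_le (k + 1) (2 * π) y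

/-- The modulation functional `(4/π)·Σ_{i=1}^d (−1)^{i+1}·g(α_i)` of the switching instances `α`:
`g = cos (2π ·)` gives the exact modulation index and `g = Γ_k` its level-`k` surrogate.
The index `i` is 0-based, so the sign is `(-1) ^ i`. -/
noncomputable def modulation {d : ℕ} (g : ℝ → ℝ) (α : Fin d → ℝ) : ℝ :=
  (4 / π) * ∑ i : Fin d, (-1 : ℝ) ^ (i : ℕ) * g (α i)

theorem abs_modulation_sub_modulation_le {d : ℕ} {g h : ℝ → ℝ} {α : Fin d → ℝ} {ε : ℝ}
    (hε : ∀ i, |g (α i) - h (α i)| ≤ ε) :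
    |modulation g α - modulation h α| ≤ 4 * d / π * ε :=
  calc |modulation g α - modulation h α|
      = 4 / π * |∑ i : Fin d, (-1 : ℝ) ^ (i : ℕ) * (g (α i) - h (α i))| := by
        simp only [modulation, mul_sub, Finset.sum_sub_distrib]
        rw [← mul_sub, abs_mul, abs_of_pos (by positivity : 0 < 4 / π)]
    _ ≤ 4 / π * ∑ i : Fin d, |(-1 : ℝ) ^ (i : ℕ) * (g (α i) - h (α i))| := by
        gcongr
        exact Finset.abs_sum_le_sum_abs _ _
    _ = 4 / π * ∑ i : Fin d, |g (α i) - h (α i)| := by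
        simp only [abs_mul, abs_neg_one_pow, one_mul]
    _ ≤ 4 / π * ∑ _i : Fin d, ε := by
        gcongr with i
        exact hε i
    _ = 4 * d / π * ε := by
        rw [Finset.sum_const, Finset.card_fin, nsmul_eq_mul]
        ring

theorem abs_modulation_cos_sub_modulation_taylorCos_le_deltaM {d : ℕ} (k : ℕ) {α : Fin d → ℝ}
    (hα : ∀ i, α i ∈ Set.Icc 0 (1 / 4)) :
    |modulation (fun t => cos (2 * π * t)) α - modulation (taylorCos k (1 / 8)) α| ≤
      deltaM d k := by
  have hterm (i : Fin d) : |cos (2 * π * α i) - taylorCos k (1 / 8) (α i)| ≤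
      (2 * π) ^ (k + 1) * (1 / 8) ^ (k + 1) / (k + 1).factorial := by
    have hdist : |α i - 1 / 8| ≤ 1 / 8 :=
      abs_le.2 ⟨by linarith [(hα i).1], by linarith [(hα i).2]⟩
    exact (abs_cos_sub_taylorCos_le k _ _).trans (by gcongr)
  exact (abs_modulation_sub_modulation_le hterm).trans_eq (by rw [deltaM]; ring)

theorem exactSet_subset_relaxedSet (d : ℕ) (m : ℝ) (k : ℕ) :
    exactSet d m ⊆ relaxedSet d m k := by
  rintro α ⟨hmono, h_nonneg, h_le, rfl⟩
  obtain ⟨h_cos_sub, h_taylor_sub⟩ := abs_sub_le_iff.1 <|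
    abs_modulation_cos_sub_modulation_taylorCos_le_deltaM k fun i => ⟨h_nonneg i, h_le i⟩
  exact ⟨hmono, h_nonneg, h_le, sub_le_comm.1 h_cos_sub, sub_le_iff_le_add'.1 h_taylor_sub⟩

theorem relaxed_inf_le_exact_inf_general {L : Type*} [ConditionallyCompleteLattice L] {d : ℕ}
    {m : ℝ} {k : ℕ} {J : (Fin d → ℝ) → L} (hne : (exactSet d m).Nonempty)
    (hbdd : BddBelow (J '' relaxedSet d m k)) :
    sInf (J '' relaxedSet d m k) ≤ sInf (J '' exactSet d m) :=
  csInf_le_csInf hbdd (hne.image J) (Set.image_mono (exactSet_subset_relaxedSet d m k))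

/-- If S is nonempty and J is bounded below on S_k, then the infimum of J over
the level-k relaxed feasible set S_k is at most the infimum of J over the exact feasible
set S; that is, J_k* ≤ J*. -/
theorem relaxed_inf_le_exact_inf (d : ℕ) (hd : 1 ≤ d) (m : ℝ) (k : ℕ)
    (J : (Fin d → ℝ) → ℝ) (hne : (exactSet d m).Nonempty)
    (hbdd : BddBelow (J '' relaxedSet d m k)) :
    sInf (J '' relaxedSet d m k) ≤ sInf (J '' exactSet d m) := by
  exact relaxed_inf_le_exact_inf_general hne hbdd
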